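/- Let k be a field and consider the path algebra of the linear quiver A_n : 1 → 2 → ⋯ → n. For each pair 1 ≤ i ≤ j ≤ n there is up to isomorphism exactly one indecomposable representation M_{ij} with dimension vector equal to the indicator of the interval [i, j] (i.e., dimension 1 at vertices i, i+1, ..., j and 0 elsewhere), and every indecomposable finite-dimensional representation of A_n is isomorphic to some M_{ij}. In particular there are exactly n(n+1)/2 indecomposables, matching the number of positive roots of type A_n. -/

import Mathlib

open Module

/-- A finite-dimensional representation of the linear quiver
`A_{n+1} : 0 → 1 → ⋯ → n`. -/
structure RepA (k : Type) [Field k] (n : ℕ) where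
  V : Fin (n + 1) → Type
  [addGrp : ∀ v, AddCommGroup (V v)]
  [mod : ∀ v, Module k (V v)]
  [fd : ∀ v, FiniteDimensional k (V v)]
  f : ∀ a : Fin n, V a.castSucc →ₗ[k] V a.succ

attribute [instance] RepA.addGrp RepA.mod RepA.fd

variable {k : Type} [Field k] {n : ℕ}

/-- Isomorphism of representations. -/
def RepA.Iso (M N : RepA k n) : Prop :=
  ∃ g : ∀ v, M.V v ≃ₗ[k] N.V v,
    ∀ (a : Fin n) (x : M.V a.castSucc), g a.succ (M.f a x) = N.f a (g a.castSucc x)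

/-- Direct sum of representations. -/
def RepA.dsum (M N : RepA k n) : RepA k n where
  V v := M.V v × N.V v
  f a := (M.f a).prodMap (N.f a)

/-- The zero representation. -/
def RepA.IsZero (M : RepA k n) : Prop := ∀ (v : Fin (n + 1)) (x : M.V v), x = 0

/-- An indecomposable representation: nonzero and not isomorphic to a direct
sum of two nonzero representations. -/
def RepA.Indec (M : RepA k n) : Prop :=
  ¬ M.IsZero ∧ ∀ N P : RepA k n, M.Iso (N.dsum P) → N.IsZero ∨ P.IsZero

/-- The dimension vector of a representation. -/
noncomputable def RepA.dimVec (M : RepA k n) : Fin (n + 1) → ℕ := fun v => finrank k (M.V v)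


namespace RepA

noncomputable def path (M : RepA k n) (v w : Fin (n + 1)) : M.V v →ₗ[k] M.V w :=
  Fin.induction (motive := fun w => M.V v →ₗ[k] M.V w)
    ((LinearMap.proj 0) ∘ₗ (LinearMap.single k M.V v))
    (fun a g => (LinearMap.proj a.succ) ∘ₗ (LinearMap.single k M.V v) + (M.f a) ∘ₗ g) w

theorem path_zero (M : RepA k n) (v : Fin (n + 1)) (y : M.V v) :
    M.path v 0 y = (Pi.single v y : ∀ u, M.V u) 0 := rfl

theorem path_succ (M : RepA k n) (v : Fin (n + 1)) (a : Fin n) (y : M.V v) :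
    M.path v a.succ y = (Pi.single v y : ∀ u, M.V u) a.succ + M.f a (M.path v a.castSucc y) := rfl

theorem path_lt (M : RepA k n) (v w : Fin (n + 1)) (y : M.V v) (h : w < v) :
    M.path v w y = 0 := by
  induction w using Fin.induction with
  | zero => rw [path_zero, Pi.single_eq_of_ne h.ne]
  | succ a ih =>
    rw [path_succ, Pi.single_eq_of_ne h.ne, ih (lt_trans Fin.castSucc_lt_succ h)]
    simp

theorem path_self (M : RepA k n) (v : Fin (n + 1)) (y : M.V v) : M.path v v y = y := by
  induction v using Fin.cases with
  | zero => rw [path_zero, Pi.single_eq_same]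
  | succ a =>
    rw [path_succ, Pi.single_eq_same, path_lt M _ _ _ Fin.castSucc_lt_succ]
    simp

theorem path_step (M : RepA k n) (v : Fin (n + 1)) (a : Fin n) (h : v ≤ a.castSucc) (y : M.V v) :
    M.path v a.succ y = M.f a (M.path v a.castSucc y) := by
  rw [path_succ, Pi.single_eq_of_ne (lt_of_le_of_lt h Fin.castSucc_lt_succ).ne', zero_add]

theorem path_comp (M : RepA k n) (v u w : Fin (n + 1)) (h : v ≤ u) (h' : u ≤ w) (y : M.V v) :
    M.path u w (M.path v u y) = M.path v w y := by
  induction w using Fin.induction with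
  | zero =>
    obtain rfl : u = 0 := Fin.le_zero_iff.1 h'
    rw [path_self]
  | succ a ih =>
    rcases h'.eq_or_lt with rfl | h'
    · rw [path_self]
    · have h2 : u ≤ a.castSucc := Fin.le_castSucc_iff.2 h'
      rw [path_step _ _ _ h2, path_step _ _ _ (h.trans h2), ih h2]

theorem Indec.of_compl {M : RepA k n} (hM : M.Indec) (U W : ∀ v, Submodule k (M.V v))
    (hc : ∀ v, IsCompl (U v) (W v))
    (hU : ∀ a, ∀ y ∈ U (Fin.castSucc a), M.f a y ∈ U a.succ)
    (hW : ∀ a, ∀ y ∈ W (Fin.castSucc a), M.f a y ∈ W a.succ) :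
    (∀ v, U v = ⊥) ∨ (∀ v, W v = ⊥) := by
  have := hM.2 ⟨fun v => U v, fun a => (M.f a).restrict (hU a)⟩
    ⟨fun v => W v, fun a => (M.f a).restrict (hW a)⟩
    ⟨fun v => (Submodule.prodEquivOfIsCompl (U v) (W v) (hc v)).symm, by
      intro a x
      obtain ⟨z, rfl⟩ := (Submodule.prodEquivOfIsCompl _ _ (hc a.castSucc)).surjective x
      obtain ⟨p, q⟩ := z
      have e : (Submodule.prodEquivOfIsCompl _ _ (hc a.succ)).symm
          (M.f a (Submodule.prodEquivOfIsCompl _ _ (hc a.castSucc) (p, q))) =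
          Prod.map ((M.f a).restrict (hU a)) ((M.f a).restrict (hW a))
            ((Submodule.prodEquivOfIsCompl _ _ (hc a.castSucc)).symm
              (Submodule.prodEquivOfIsCompl _ _ (hc a.castSucc) (p, q))) := by
        rw [LinearEquiv.symm_apply_eq, LinearEquiv.symm_apply_apply]
        simp [Submodule.coe_prodEquivOfIsCompl']
      exact e⟩
  rcases this with h | h
  · left
    intro v
    rw [Submodule.eq_bot_iff]
    intro x hx
    exact congrArg Subtype.val (h v ⟨x, hx⟩)
  · right
    intro v
    rw [Submodule.eq_bot_iff]
    intro x hx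
    exact congrArg Subtype.val (h v ⟨x, hx⟩)

structure Std (M : RepA k n) (i j : Fin (n + 1)) (x : ∀ v, M.V v) (φ : ∀ v, M.V v →ₗ[k] k) :
    Prop where
  le : i ≤ j
  one : ∀ v, i ≤ v → v ≤ j → φ v (x v) = 1
  xz : ∀ v, ¬ (i ≤ v ∧ v ≤ j) → x v = 0
  φz : ∀ v, ¬ (i ≤ v ∧ v ≤ j) → φ v = 0
  fx : ∀ a : Fin n, i ≤ a.castSucc → M.f a (x a.castSucc) = x a.succ
  φf : ∀ (a : Fin n) (y), a.succ ≤ j → φ a.succ (M.f a y) = φ a.castSucc y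

theorem exists_std {M : RepA k n} (hM : ¬ M.IsZero) : ∃ i j x φ, M.Std i j x φ := by
  classical
  let S : Finset (Fin (n + 1) × Fin (n + 1)) :=
    Finset.univ.filter (fun p => p.1 ≤ p.2 ∧ M.path p.1 p.2 ≠ 0)
  have hS : S.Nonempty := by
    simp only [IsZero, not_forall] at hM
    obtain ⟨v, y, hy⟩ := hM
    refine ⟨(v, v), ?_⟩
    simp only [S, Finset.mem_filter, Finset.mem_univ, true_and, le_refl]
    intro h
    apply hy
    rw [← M.path_self v y, h]
    rfl
  obtain ⟨⟨i, j⟩, hp, hmax⟩ := S.exists_max_image (fun p => p.2.val - p.1.val) hS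
  simp only [S, Finset.mem_filter, Finset.mem_univ, true_and, and_imp, Prod.forall] at hp hmax
  obtain ⟨hij, hne⟩ := hp
  obtain ⟨y, hy⟩ : ∃ y, M.path i j y ≠ 0 := by
    by_contra! h
    exact hne (LinearMap.ext h)
  obtain ⟨ψ, hψ⟩ := Module.Projective.exists_dual_eq_one k hy
  have hz : ∀ u w, u ≤ w → j.val - i.val < w.val - u.val → M.path u w = 0 := by
    intro u w h1 h2
    by_contra h
    exact absurd (hmax u w h1 h) (by omega)
  refine ⟨i, j, fun u => M.path i u y, fun u => ψ ∘ₗ M.path u j, hij, ?_, ?_, ?_, ?_, ?_⟩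
  · intro v h1 h2
    simp [M.path_comp i v j h1 h2, hψ]
  · intro v hv
    by_cases h : i ≤ v
    · have : j < v := by
        by_contra hh
        exact hv ⟨h, not_lt.1 hh⟩
      rw [hz i v h (by simp only [Fin.le_def, Fin.lt_def] at *; omega)]
      rfl
    · exact path_lt _ _ _ _ (not_le.1 h)
  · intro v hv
    ext z
    by_cases h : v ≤ j
    · have : v < i := by
        by_contra hh
        exact hv ⟨not_lt.1 hh, h⟩
      rw [hz v j h (by simp only [Fin.le_def, Fin.lt_def] at *; omega)]
      simp
    · simp [path_lt _ _ _ _ (not_le.1 h)]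
  · intro a ha
    exact (path_step _ _ _ ha _).symm
  · intro a z ha
    have h1 := M.path_step a.castSucc a le_rfl z
    rw [path_self] at h1
    simp only [LinearMap.comp_apply]
    rw [← h1, path_comp _ _ _ _ Fin.castSucc_lt_succ.le ha]

theorem Indec.eq_smul {M : RepA k n} (hM : M.Indec) {i j x φ} (h : M.Std i j x φ) (v) (y : M.V v) :
    y = φ v y • x v := by
  have key := hM.of_compl (fun v => Submodule.span k {x v}) (fun v => LinearMap.ker (φ v)) ?_ ?_ ?_
  · rcases key with key | key
    · exfalso
      have h1 := key i
      have h2 := h.one i le_rfl h.le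
      rw [Submodule.span_singleton_eq_bot] at h1
      rw [h1] at h2
      simp at h2
    · have hk : ∀ v (z : M.V v), φ v z = 0 → z = 0 := by
        intro v z hz
        have : z ∈ LinearMap.ker (φ v) := hz
        rw [key v] at this
        simpa using this
      by_cases hv : i ≤ v ∧ v ≤ j
      · rw [← sub_eq_zero]
        apply hk
        simp [h.one v hv.1 hv.2]
      · rw [h.φz v hv]
        simp only [LinearMap.zero_apply, zero_smul]
        apply hk
        rw [h.φz v hv]
        rfl
  · intro v
    by_cases hv : i ≤ v ∧ v ≤ j
    · have h1 := h.one v hv.1 hv.2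
      constructor
      · rw [Submodule.disjoint_def]
        intro z hz hz'
        obtain ⟨c, rfl⟩ := Submodule.mem_span_singleton.1 hz
        have : c = 0 := by simpa [h1] using hz'
        simp [this]
      · rw [codisjoint_iff, eq_top_iff]
        intro z _
        rw [Submodule.mem_sup]
        exact ⟨φ v z • x v, Submodule.smul_mem _ _ (Submodule.mem_span_singleton_self _),
          z - φ v z • x v, by simp [h1], by simp⟩
    · rw [h.xz v hv, h.φz v hv, Submodule.span_zero_singleton, LinearMap.ker_zero]
      exact isCompl_bot_top
  · intro a z hz
    obtain ⟨c, rfl⟩ := Submodule.mem_span_singleton.1 hz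
    rw [map_smul]
    apply Submodule.smul_mem
    by_cases ha : i ≤ a.castSucc
    · rw [h.fx a ha]
      exact Submodule.mem_span_singleton_self _
    · rw [h.xz _ (fun hh => ha hh.1), map_zero]
      exact Submodule.zero_mem _
  · intro a z hz
    rw [LinearMap.mem_ker] at hz ⊢
    by_cases ha : a.succ ≤ j
    · rw [h.φf a z ha, hz]
    · rw [h.φz _ (fun hh => ha hh.2)]
      rfl

theorem Indec.dimVec_eq {M : RepA k n} (hM : M.Indec) {i j x φ} (h : M.Std i j x φ) :
    M.dimVec = fun v => if i ≤ v ∧ v ≤ j then 1 else 0 := by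
  funext v
  have hs := hM.eq_smul h v
  unfold dimVec
  split_ifs with hv
  · refine finrank_eq_one (x v) ?_ (fun w => ⟨φ v w, (hs w).symm⟩)
    intro h0
    have := h.one v hv.1 hv.2
    simp [h0] at this
  · have : Subsingleton (M.V v) := ⟨fun a b => by
      rw [hs a, hs b, h.xz v hv, smul_zero, smul_zero]⟩
    exact finrank_zero_of_subsingleton

theorem iso_of_std {M N : RepA k n} (hM : M.Indec) (hN : N.Indec) {i j x φ x' φ'}
    (h : M.Std i j x φ) (h' : N.Std i j x' φ') : M.Iso N := by
  have aux : ∀ {M N : RepA k n} {x φ x' φ'}, M.Indec → M.Std i j x φ → N.Std i j x' φ' →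
      ∀ v (y : M.V v), φ' v (φ v y • x' v) • x v = y := by
    intro M N x φ x' φ' hM h h' v y
    by_cases hv : i ≤ v ∧ v ≤ j
    · rw [map_smul, h'.one v hv.1 hv.2, smul_eq_mul, mul_one, ← hM.eq_smul h]
    · rw [hM.eq_smul h v y, h.xz v hv]
      simp
  refine ⟨fun v => LinearEquiv.ofLinearMap ((φ v).smulRight (x' v)) ((φ' v).smulRight (x v)) ?_ ?_, ?_⟩
  · ext y
    exact aux hN h' h v y
  · ext y
    exact aux hM h h' v y
  · intro a y
    change φ a.succ (M.f a y) • x' a.succ = N.f a (φ a.castSucc y • x' a.castSucc)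
    rw [map_smul]
    by_cases hv : i ≤ a.castSucc ∧ a.castSucc ≤ j
    · rw [h'.fx a hv.1]
      by_cases ha : a.succ ≤ j
      · rw [h.φf a y ha]
      · rw [h'.xz _ (fun hh => ha hh.2), smul_zero, smul_zero]
    · have : y = 0 := by rw [hM.eq_smul h _ y, h.xz _ hv, smul_zero]
      simp [this]

noncomputable def intervalRep (k : Type) [Field k] (n : ℕ) (i j : Fin (n + 1)) : RepA k n where
  V v := PLift (i ≤ v ∧ v ≤ j) → k
  f a := LinearMap.pi fun _ =>
    if h : i ≤ a.castSucc ∧ a.castSucc ≤ j then LinearMap.proj ⟨h⟩ else 0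

theorem intervalRep_dimVec (i j : Fin (n + 1)) :
    (intervalRep k n i j).dimVec = fun v => if i ≤ v ∧ v ≤ j then 1 else 0 := by
  funext v
  change finrank k (PLift (i ≤ v ∧ v ≤ j) → k) = _
  rw [Module.finrank_fintype_fun_eq_card]
  split_ifs with h
  · rw [Fintype.card_eq_one_iff]
    exact ⟨⟨h⟩, fun _ => rfl⟩
  · rw [Fintype.card_eq_zero_iff]
    exact ⟨fun hh => h hh.down⟩

theorem intervalRep_bij (i j : Fin (n + 1)) (a : Fin n) (h1 : i ≤ a.castSucc) (h2 : a.succ ≤ j) :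
    Function.Bijective ((intervalRep k n i j).f a) := by
  have h : i ≤ a.castSucc ∧ a.castSucc ≤ j := ⟨h1, Fin.castSucc_lt_succ.le.trans h2⟩
  have h' : i ≤ a.succ ∧ a.succ ≤ j := ⟨h1.trans Fin.castSucc_lt_succ.le, h2⟩
  have hf : ∀ (y : PLift (i ≤ a.castSucc ∧ a.castSucc ≤ j) → k)
      (t : PLift (i ≤ a.succ ∧ a.succ ≤ j)),
      ((intervalRep k n i j).f a : _ → (PLift (i ≤ a.succ ∧ a.succ ≤ j) → k)) y t = y ⟨h⟩ := by
    intro y t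
    change (if h : i ≤ a.castSucc ∧ a.castSucc ≤ j then LinearMap.proj ⟨h⟩ else 0 :
      (PLift (i ≤ a.castSucc ∧ a.castSucc ≤ j) → k) →ₗ[k] k) y = _
    rw [dif_pos h]
    rfl
  constructor
  · intro y z hyz
    funext t
    have := congrFun hyz ⟨h'⟩
    have h3 := hf y ⟨h'⟩
    have h4 := hf z ⟨h'⟩
    exact h3.symm.trans (this.trans h4)
  · intro z
    refine ⟨fun _ => z ⟨h'⟩, ?_⟩
    funext t
    exact hf _ t

theorem intervalRep_indec (i j : Fin (n + 1)) (hij : i ≤ j) : (intervalRep k n i j).Indec := by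
  have hd := intervalRep_dimVec (k := k) i j
  constructor
  · intro h
    have h1 := congrFun hd i
    have : Subsingleton ((intervalRep k n i j).V i) := ⟨fun a b => by rw [h i a, h i b]⟩
    rw [dimVec, finrank_zero_of_subsingleton] at h1
    simp [hij] at h1
  · rintro N P ⟨g, hg⟩
    have hsum : ∀ v, finrank k (N.V v) + finrank k (P.V v) = if i ≤ v ∧ v ≤ j then 1 else 0 := by
      intro v
      rw [← congrFun hd v, dimVec, (g v).finrank_eq]
      exact (Module.finrank_prod (R := k) (M := N.V v) (M' := P.V v)).symm
    have hb : ∀ a : Fin n, i ≤ a.castSucc → a.succ ≤ j →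
        Function.Bijective (N.f a) ∧ Function.Bijective (P.f a) := by
      intro a h1 h2
      have hB : Function.Bijective (Prod.map (N.f a) (P.f a)) := by
        have e : (Prod.map (N.f a) (P.f a)) ∘ (g a.castSucc) =
            (g a.succ) ∘ ((intervalRep k n i j).f a) := by
          funext y
          exact (hg a y).symm
        have := (g a.succ).bijective.comp (intervalRep_bij (k := k) i j a h1 h2)
        rw [← e] at this
        exact (Function.Bijective.of_comp_iff _ (g a.castSucc).bijective).1 this
      exact Prod.map_bijective.1 hB
    have hc : ∀ v, i ≤ v → v ≤ j → finrank k (N.V v) = finrank k (N.V i) ∧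
        finrank k (P.V v) = finrank k (P.V i) := by
      intro v
      induction v using Fin.induction with
      | zero =>
        intro h1 _
        obtain rfl : i = 0 := Fin.le_zero_iff.1 h1
        exact ⟨rfl, rfl⟩
      | succ a ih =>
        intro h1 h2
        rcases h1.eq_or_lt with rfl | h1
        · exact ⟨rfl, rfl⟩
        · have h3 : i ≤ a.castSucc := Fin.le_castSucc_iff.2 h1
          obtain ⟨e1, e2⟩ := ih h3 (Fin.castSucc_lt_succ.le.trans h2)
          obtain ⟨b1, b2⟩ := hb a h3 h2
          rw [← e1, ← e2]
          exact ⟨(LinearEquiv.ofBijective _ b1).finrank_eq.symm,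
            (LinearEquiv.ofBijective _ b2).finrank_eq.symm⟩
    have hi := hsum i
    rw [if_pos ⟨le_rfl, hij⟩] at hi
    have hcase : finrank k (N.V i) = 0 ∨ finrank k (P.V i) = 0 := by omega
    rcases hcase with h0 | h0
    · left
      intro v x
      have : finrank k (N.V v) = 0 := by
        by_cases hv : i ≤ v ∧ v ≤ j
        · rw [(hc v hv.1 hv.2).1, h0]
        · have := hsum v
          rw [if_neg hv] at this
          omega
      have := Module.finrank_zero_iff.1 this
      exact Subsingleton.elim _ _
    · right
      intro v x
      have : finrank k (P.V v) = 0 := by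
        by_cases hv : i ≤ v ∧ v ≤ j
        · rw [(hc v hv.1 hv.2).2, h0]
        · have := hsum v
          rw [if_neg hv] at this
          omega
      have := Module.finrank_zero_iff.1 this
      exact Subsingleton.elim _ _

end RepA

/-- Gabriel's theorem in type `A`: for each interval `[i,j]` there is an
indecomposable representation `M_{ij}` with dimension vector the indicator
function of `[i,j]`; every indecomposable has such a dimension vector; and two
indecomposables with the same dimension vector are isomorphic.  In particular
the indecomposables are, up to isomorphism, exactly the `M_{ij}`, and their
number is the number of positive roots of type `A`. -/
theorem gabriel_theorem_typeA (k : Type) [Field k] (n : ℕ) :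
    (∀ i j : Fin (n + 1), i ≤ j → ∃ M : RepA k n, M.Indec ∧
        M.dimVec = fun v => if i ≤ v ∧ v ≤ j then 1 else 0)
    ∧ (∀ M : RepA k n, M.Indec → ∃ i j : Fin (n + 1), i ≤ j ∧
        M.dimVec = fun v => if i ≤ v ∧ v ≤ j then 1 else 0)
    ∧ (∀ M N : RepA k n, M.Indec → N.Indec → M.dimVec = N.dimVec → M.Iso N) := by
  refine ⟨fun i j hij => ⟨RepA.intervalRep k n i j, RepA.intervalRep_indec i j hij,
    RepA.intervalRep_dimVec i j⟩, ?_, ?_⟩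
  · intro M hM
    obtain ⟨i, j, x, φ, h⟩ := RepA.exists_std hM.1
    exact ⟨i, j, h.le, hM.dimVec_eq h⟩
  · intro M N hM hN hd
    obtain ⟨i, j, x, φ, h⟩ := RepA.exists_std hM.1
    obtain ⟨i', j', x', φ', h'⟩ := RepA.exists_std hN.1
    rw [hM.dimVec_eq h, hN.dimVec_eq h'] at hd
    have hiff : ∀ v, (i ≤ v ∧ v ≤ j) ↔ (i' ≤ v ∧ v ≤ j') := by
      intro v
      have := congrFun hd v
      split_ifs at this <;> tauto
    have a1 := (hiff i).1 ⟨le_rfl, h.le⟩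
    have a2 := (hiff j).1 ⟨h.le, le_rfl⟩
    have a3 := (hiff i').2 ⟨le_rfl, h'.le⟩
    have a4 := (hiff j').2 ⟨h'.le, le_rfl⟩
    obtain rfl := le_antisymm a1.1 a3.1
    obtain rfl := le_antisymm a2.2 a4.2
    exact RepA.iso_of_std hM hN h h'
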